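/- Define α, σ : ℝ → ℝ by α(λ) = e^λ / √(1 + e^{2λ}) and σ(λ) = 1 / √(1 + e^{2λ}), let E be a finite-dimensional real normed vector space, let c ∈ E, and let x : ℝ → E be differentiable with x'(λ) = α(λ) c − α(λ)² x(λ) for all λ. Then for all λ₀ ≤ λ₁, setting h = λ₁ − λ₀, one has x(λ₁) = (σ(λ₁)/σ(λ₀)) · x(λ₀) + α(λ₁) · (1 − e^{−h}) · c. -/

import Mathlib

/-- Signal rate in the log-SNR parameterization. -/
noncomputable def αRate (l : ℝ) : ℝ := Real.exp l / Real.sqrt (1 + Real.exp (2 * l))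

/-- Noise rate in the log-SNR parameterization. -/
noncomputable def σRate (l : ℝ) : ℝ := 1 / Real.sqrt (1 + Real.exp (2 * l))

theorem hasDerivAt_S (l : ℝ) : HasDerivAt (fun l : ℝ => Real.sqrt (1 + Real.exp (2 * l)))
    (Real.exp (2 * l) / Real.sqrt (1 + Real.exp (2 * l))) l := by
  have h1 : HasDerivAt (fun l : ℝ => 1 + Real.exp (2 * l)) (Real.exp (2 * l) * (2 * 1)) l :=
    (((hasDerivAt_id l).const_mul 2).exp).const_add 1
  have h2 := h1.sqrt (by positivity)
  convert h2 using 1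
  have : 0 < Real.sqrt (1 + Real.exp (2 * l)) := Real.sqrt_pos.2 (by positivity)
  field_simp

/-- Exact solution of the probability-flow ODE with frozen clean-image
prediction `c` reproduces the first-order exponential (DDIM-type) step. -/
theorem frozen_prediction_exact_step
    {E : Type*} [NormedAddCommGroup E] [NormedSpace ℝ E] [FiniteDimensional ℝ E]
    (c : E) (x : ℝ → E)
    (hx : ∀ l, HasDerivAt x (αRate l • c - αRate l ^ 2 • x l) l)
    (lam₀ lam₁ : ℝ) (hle : lam₀ ≤ lam₁) (h : ℝ) (hh : h = lam₁ - lam₀) :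
    x lam₁ = (σRate lam₁ / σRate lam₀) • x lam₀ + (αRate lam₁ * (1 - Real.exp (-h))) • c := by
  have hS : ∀ l : ℝ, 0 < Real.sqrt (1 + Real.exp (2 * l)) :=
    fun l => Real.sqrt_pos.2 (by positivity)
  have key : ∀ l, HasDerivAt
      (fun l => Real.sqrt (1 + Real.exp (2 * l)) • x l - Real.exp l • c) 0 l := by
    intro l
    have h1 := ((hasDerivAt_S l).smul (hx l)).sub ((Real.hasDerivAt_exp l).smul_const c)
    refine HasDerivAt.congr_deriv h1 ?_
    have hs := hS l
    have e1 : Real.sqrt (1 + Real.exp (2 * l)) * αRate l = Real.exp l := by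
      unfold αRate
      field_simp
    have e2 : Real.sqrt (1 + Real.exp (2 * l)) * αRate l ^ 2
        = Real.exp (2 * l) / Real.sqrt (1 + Real.exp (2 * l)) := by
      have : Real.exp (2 * l) = Real.exp l ^ 2 := by rw [← Real.exp_nat_mul]; norm_num
      rw [pow_two, ← mul_assoc, e1, αRate, this]
      ring
    rw [smul_sub, smul_smul, smul_smul, e1, e2]
    abel
  have hc := is_const_of_deriv_eq_zero (fun l => (key l).differentiableAt)
    (fun l => (key l).deriv) lam₁ lam₀
  have h1 := hS lam₁
  have h0 := hS lam₀
  have hx1 : Real.sqrt (1 + Real.exp (2 * lam₁)) • x lam₁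
      = Real.sqrt (1 + Real.exp (2 * lam₀)) • x lam₀ + (Real.exp lam₁ - Real.exp lam₀) • c := by
    rw [sub_eq_iff_eq_add] at hc
    rw [hc, sub_smul]
    abel
  have hx2 : x lam₁ = (Real.sqrt (1 + Real.exp (2 * lam₁)))⁻¹ •
      (Real.sqrt (1 + Real.exp (2 * lam₁)) • x lam₁) := by
    rw [smul_smul, inv_mul_cancel₀ h1.ne', one_smul]
  rw [hx2, hx1, smul_add, smul_smul, smul_smul]
  congr 2
  · unfold σRate
    field_simp
  · have : Real.exp lam₀ = Real.exp lam₁ * Real.exp (-h) := by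
      rw [← Real.exp_add, hh]
      congr 1
      ring
    rw [this]
    unfold αRate
    field_simp
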